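/- arXiv:1909.00495 — 2 statements merged into one kernel-verified Lean document; each statement's English description precedes it below -/
import Mathlib

section
/- Let n ≥ 2 and 1 ≤ d ≤ n−1 be integers, s ∈ ℝ, and let w be a weight such that there exist c_w, C_w > 0 with c_w² ≤ W_k = Σ_{A∈Ω_k} w(k,A)² ≤ C_w² for every k ∈ ℤ^n. Then the operator F_{W_k^{−1}} ∘ R_d^* : L_s^{2,2}(X_{d,n};w) → H^s(𝕋^n) is (1/c_w)-Lipschitz: for every g ∈ L_s^{2,2}(X_{d,n};w) one has ‖F_{W_k^{−1}} R_d^* g‖_{H^s(𝕋^n)} ≤ (1/c_w) ‖g‖_{L_s^{2,2}(X_{d,n};w)}. -/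
/-!
Setting: the flat torus 𝕋ⁿ = ℝⁿ/ℤⁿ and its d-plane Radon transform.

* Periodic distributions 𝒯' are modeled, via the structure theorem, by their
  Fourier coefficient sequences `ℤⁿ → ℂ` of at most polynomial growth (`PDist`).
* `Gr d n` is the Grassmannian of d-dimensional subspaces of ℚⁿ.
* The d-plane Radon transform is encoded on the Fourier side by the Fourier
  slice identity `(R_{d,A} f)^(k) = f̂(k)` if `k ⊥ A` and `0` otherwise (`radonC`).
* `hsNormSq s c = Σ_k ⟨k⟩^{2s} |c k|²` is the squared H^s(𝕋ⁿ) norm (in ℝ≥0∞),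
  `dataNormSq s w g = Σ_A Σ_k ⟨k⟩^{2s} w(k,A)² |ĝ(k,A)|²` is the squared
  L_s^{2,2}(X_{d,n}; w) norm, `hsNorm`/`dataNorm` are their square roots.
* `Wk w k = Σ_{A ∈ Ω_k} w(k,A)²` and `radonStar` is the adjoint
  `(R_d^* g)^(k) = Σ_{A ∈ Ω_k} w(k,A)² ĝ(k,A)`.
-/

open scoped ENNReal BigOperators
open MeasureTheory Classical Filter

noncomputable section

abbrev Zn (n : ℕ) := Fin n → ℤ
abbrev Tn (n : ℕ) := Fin n → AddCircle (1 : ℝ)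

/-- Japanese bracket ⟨k⟩ = (1+|k|²)^{1/2}. -/
def jap {n : ℕ} (k : Zn n) : ℝ := Real.sqrt (1 + ∑ i, ((k i : ℝ))^2)

/-- Periodic distributions on 𝕋ⁿ, modeled via their Fourier coefficients
(structure theorem: 𝒯' ≅ sequences of at most polynomial growth). -/
structure PDist (n : ℕ) where
  coef : Zn n → ℂ
  growth : ∃ C N : ℝ, 0 < C ∧ ∀ k, ‖coef k‖ ≤ C * jap k ^ N

/-- Grassmannian of d-dimensional subspaces of ℚⁿ. -/
def Gr (d n : ℕ) := {A : Submodule ℚ (Fin n → ℚ) // Module.finrank ℚ A = d}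

/-- `k ⊥ A`. -/
def perp {d n : ℕ} (k : Zn n) (A : Gr d n) : Prop :=
  ∀ v ∈ A.1, ∑ i, (k i : ℚ) * v i = 0

/-- A weight `w : ℤⁿ × Gr(d,n) → (0,∞)` with at most polynomial decay in each
variable `A`. -/
def IsWeight {d n : ℕ} (w : Zn n → Gr d n → ℝ) : Prop :=
  (∀ k A, 0 < w k A) ∧ ∀ A : Gr d n, ∃ C N : ℝ, 0 < C ∧ ∀ k, C * jap k ^ (-N) ≤ w k A

/-- Fourier-slice definition of the d-plane Radon transform `R_{d,A}`
on Fourier coefficient sequences. -/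
def radonC {d n : ℕ} (A : Gr d n) (c : Zn n → ℂ) : Zn n → ℂ :=
  fun k => if perp k A then c k else 0

/-- The d-plane Radon transform `R_{d,A}` on periodic distributions. -/
def radonD {d n : ℕ} (A : Gr d n) (f : PDist n) : PDist n :=
  ⟨radonC A f.coef, by
    obtain ⟨C, N, hC, h⟩ := f.growth
    refine ⟨C, N, hC, fun k => ?_⟩
    by_cases hk : perp k A
    · simpa [radonC, hk] using h k
    · simp only [radonC, hk, if_false, norm_zero]
      have h1 : 0 ≤ jap k ^ N := Real.rpow_nonneg (Real.sqrt_nonneg _) N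
      positivity⟩

/-- Squared H^s(𝕋ⁿ) norm `Σ_k ⟨k⟩^{2s}|c k|²` (possibly infinite). -/
def hsNormSq {n : ℕ} (s : ℝ) (c : Zn n → ℂ) : ℝ≥0∞ :=
  ∑' k : Zn n, ENNReal.ofReal (jap k ^ (2*s) * ‖c k‖^2)

/-- H^s(𝕋ⁿ) norm (possibly infinite). -/
def hsNorm {n : ℕ} (s : ℝ) (c : Zn n → ℂ) : ℝ≥0∞ := hsNormSq s c ^ (1/2 : ℝ)

/-- Squared L_s^{2,2}(X_{d,n}; w) norm (possibly infinite). -/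
def dataNormSq {d n : ℕ} (s : ℝ) (w : Zn n → Gr d n → ℝ) (g : Gr d n → Zn n → ℂ) : ℝ≥0∞ :=
  ∑' A : Gr d n, ∑' k : Zn n, ENNReal.ofReal (jap k ^ (2*s) * (w k A)^2 * ‖g A k‖^2)

/-- L_s^{2,2}(X_{d,n}; w) norm (possibly infinite). -/
def dataNorm {d n : ℕ} (s : ℝ) (w : Zn n → Gr d n → ℝ) (g : Gr d n → Zn n → ℂ) : ℝ≥0∞ :=
  dataNormSq s w g ^ (1/2 : ℝ)

/-- `W_k = Σ_{A ∈ Ω_k} w(k,A)²`. -/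
def Wk {d n : ℕ} (w : Zn n → Gr d n → ℝ) (k : Zn n) : ℝ :=
  ∑' A : {A : Gr d n // perp k A}, (w k A.1)^2

/-- The adjoint `R_d^*`: `(R_d^* g)^(k) = Σ_{A ∈ Ω_k} w(k,A)² ĝ(k,A)`. -/
def radonStar {d n : ℕ} (w : Zn n → Gr d n → ℝ) (g : Gr d n → Zn n → ℂ) : Zn n → ℂ :=
  fun k => ∑' A : {A : Gr d n // perp k A}, ((w k A.1 : ℝ) : ℂ)^2 * g A.1 k

theorem cs_aux {ι : Type*} (w : ι → ℝ) (hw : ∀ i, 0 < w i) (g : ι → ℂ)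
    (h1 : Summable fun i => w i ^ 2) (h2 : Summable fun i => w i ^ 2 * ‖g i‖ ^ 2) :
    ‖∑' i, ((w i : ℝ) : ℂ) ^ 2 * g i‖ ^ 2 ≤ (∑' i, w i ^ 2) * ∑' i, w i ^ 2 * ‖g i‖ ^ 2 := by
  have h := Real.summable_and_inner_le_Lp_mul_Lq_tsum_of_nonneg (p := 2) (q := 2)
    (f := w) (g := fun i => w i * ‖g i‖) Real.HolderConjugate.two_two
    (fun i => (hw i).le) (fun i => mul_nonneg (hw i).le (norm_nonneg _))
    (by simpa using h1) (by simpa [mul_pow] using h2)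
  have hn : ∀ i, ‖((w i : ℝ) : ℂ) ^ 2 * g i‖ = w i * (w i * ‖g i‖) := fun i => by
    simp [abs_of_pos (hw i)]; ring
  have h3 : ‖∑' i, ((w i : ℝ) : ℂ) ^ 2 * g i‖ ≤ ∑' i, w i * (w i * ‖g i‖) := by
    have := norm_tsum_le_tsum_norm (f := fun i => ((w i : ℝ) : ℂ) ^ 2 * g i)
      (by simpa only [hn] using h.1)
    simpa only [hn] using this
  have h4 := h3.trans h.2
  simp only [Real.rpow_ofNat, mul_pow, ← Real.sqrt_eq_rpow] at h4
  have p1 : 0 ≤ ∑' i, w i ^ 2 := tsum_nonneg fun i => by positivity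
  have p2 : 0 ≤ ∑' i, w i ^ 2 * ‖g i‖ ^ 2 := tsum_nonneg fun i => by positivity
  calc _ ≤ (√(∑' i, w i ^ 2) * √(∑' i, w i ^ 2 * ‖g i‖ ^ 2)) ^ 2 :=
        pow_le_pow_left₀ (norm_nonneg _) h4 2
    _ = _ := by rw [mul_pow, Real.sq_sqrt p1, Real.sq_sqrt p2]

theorem jap_pos {n : ℕ} (k : Zn n) : 0 < jap k :=
  Real.sqrt_pos.2 (by positivity)

theorem key_aux {n d : ℕ} (s : ℝ) (w : Zn n → Gr d n → ℝ) (hw : IsWeight w) (cw : ℝ)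
    (hcw : 0 < cw) (k : Zn n)
    (hWsum : Summable (fun A : {A : Gr d n // perp k A} => (w k A.1) ^ 2))
    (hWlb : cw ^ 2 ≤ Wk w k) (g : Gr d n → Zn n → ℂ)
    (hfin : ∑' A : Gr d n, ENNReal.ofReal (jap k ^ (2*s) * (w k A)^2 * ‖g A k‖^2) ≠ ∞) :
    ENNReal.ofReal (jap k ^ (2*s) * ‖(((Wk w k)⁻¹ : ℝ) : ℂ) * radonStar w g k‖^2)
      ≤ ENNReal.ofReal (1 / cw) ^ 2 *
        ∑' A : Gr d n, ENNReal.ofReal (jap k ^ (2*s) * (w k A)^2 * ‖g A k‖^2) := by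
  have hJ : 0 < jap k ^ (2*s) := Real.rpow_pos_of_pos (jap_pos k) _
  have hW : 0 < Wk w k := lt_of_lt_of_le (by positivity) hWlb
  have hnn : ∀ A : Gr d n, 0 ≤ jap k ^ (2*s) * (w k A)^2 * ‖g A k‖^2 := fun A => by positivity
  have hs : Summable fun A : Gr d n => jap k ^ (2*s) * (w k A)^2 * ‖g A k‖^2 := by
    have := ENNReal.summable_toReal hfin
    simpa only [ENNReal.toReal_ofReal (hnn _)] using this
  have hs' : Summable fun A : Gr d n => (w k A)^2 * ‖g A k‖^2 := by
    simp only [mul_assoc] at hs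
    exact (summable_mul_left_iff hJ.ne').1 hs
  have hs2 : Summable fun A : {A : Gr d n // perp k A} => (w k A.1)^2 * ‖g A.1 k‖^2 :=
    hs'.comp_injective Subtype.val_injective
  have hcs := cs_aux (fun A : {A : Gr d n // perp k A} => w k A.1) (fun A => hw.1 k A.1)
    (fun A => g A.1 k) hWsum hs2
  have hle : ∑' A : {A : Gr d n // perp k A}, (w k A.1)^2 * ‖g A.1 k‖^2
      ≤ ∑' A : Gr d n, (w k A)^2 * ‖g A k‖^2 :=
    hs2.tsum_le_tsum_of_inj Subtype.val Subtype.val_injective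
      (fun A _ => by positivity) (fun A => le_rfl) hs'
  have hcs' : ‖radonStar w g k‖ ^ 2 ≤ Wk w k * ∑' A : Gr d n, (w k A)^2 * ‖g A k‖^2 :=
    hcs.trans (mul_le_mul_of_nonneg_left hle hW.le)
  rw [← ENNReal.ofReal_tsum_of_nonneg hnn hs, ← ENNReal.ofReal_pow (by positivity),
    ← ENNReal.ofReal_mul (by positivity)]
  apply ENNReal.ofReal_le_ofReal
  simp only [mul_assoc]
  rw [tsum_mul_left, norm_mul, mul_pow, Complex.norm_real, Real.norm_of_nonneg (by positivity)]
  set T := ∑' A : Gr d n, (w k A)^2 * ‖g A k‖^2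
  have hT : 0 ≤ T := tsum_nonneg fun A => by positivity
  have h5 : (Wk w k)⁻¹ ^ 2 * ‖radonStar w g k‖ ^ 2 ≤ (1 / cw) ^ 2 * T := by
    calc _ ≤ (Wk w k)⁻¹ ^ 2 * (Wk w k * T) := by gcongr
      _ = (Wk w k)⁻¹ * T := by field_simp
      _ ≤ (cw ^ 2)⁻¹ * T := by gcongr
      _ = _ := by simp
  calc _ ≤ jap k ^ (2*s) * ((1 / cw) ^ 2 * T) := by gcongr
    _ = _ := by ring

/-- Lipschitz bound for `F_{W_k⁻¹} ∘ R_d^*`.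
If `c_w² ≤ W_k ≤ C_w²` for all `k`, then
`‖F_{W_k⁻¹} R_d^* g‖_{H^s(𝕋ⁿ)} ≤ (1/c_w) ‖g‖_{L_s^{2,2}(X_{d,n};w)}`
for every `g ∈ L_s^{2,2}(X_{d,n};w)`. -/
theorem statement2 {n d : ℕ} (hn : 2 ≤ n) (hd1 : 1 ≤ d) (hd2 : d ≤ n - 1)
    (s : ℝ) (w : Zn n → Gr d n → ℝ) (hw : IsWeight w) (cw Cw : ℝ) (hcw : 0 < cw) (hCw : 0 < Cw)
    (hWsum : ∀ k : Zn n, Summable (fun A : {A : Gr d n // perp k A} => (w k A.1) ^ 2))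
    (hWlb : ∀ k : Zn n, cw ^ 2 ≤ Wk w k) (hWub : ∀ k : Zn n, Wk w k ≤ Cw ^ 2) :
    ∀ g : Gr d n → PDist n, dataNormSq s w (fun A => (g A).coef) < ∞ →
      hsNorm s (fun k : Zn n =>
          (((Wk w k)⁻¹ : ℝ) : ℂ) * radonStar w (fun A => (g A).coef) k)
        ≤ ENNReal.ofReal (1 / cw) * dataNorm s w (fun A => (g A).coef) := by
  intro g hg
  unfold hsNorm dataNorm
  have hcomm : dataNormSq s w (fun A => (g A).coef) = ∑' k : Zn n, ∑' A : Gr d n,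
      ENNReal.ofReal (jap k ^ (2*s) * (w k A)^2 * ‖(g A).coef k‖^2) := ENNReal.tsum_comm
  have hfin : ∀ k : Zn n, ∑' A : Gr d n,
      ENNReal.ofReal (jap k ^ (2*s) * (w k A)^2 * ‖(g A).coef k‖^2) ≠ ∞ :=
    ENNReal.ne_top_of_tsum_ne_top (hcomm ▸ hg.ne)
  have hmain : hsNormSq s (fun k : Zn n =>
          (((Wk w k)⁻¹ : ℝ) : ℂ) * radonStar w (fun A => (g A).coef) k)
      ≤ ENNReal.ofReal (1 / cw) ^ 2 * dataNormSq s w (fun A => (g A).coef) := by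
    rw [hcomm, ← ENNReal.tsum_mul_left]
    exact ENNReal.tsum_le_tsum fun k =>
      key_aux s w hw cw hcw k (hWsum k) (hWlb k) (fun A => (g A).coef) (hfin k)
  refine (ENNReal.rpow_le_rpow hmain (by norm_num)).trans_eq ?_
  rw [ENNReal.mul_rpow_of_nonneg _ _ (by norm_num), ← ENNReal.rpow_natCast, ← ENNReal.rpow_mul]
  norm_num
end
end

section
/- Let n ≥ 2 and 1 ≤ d ≤ n−1 be integers and let w be a weight such that there exist c_w, C_w > 0 with c_w² ≤ W_k ≤ C_w² for every k ∈ ℤ^n. Let r, t, s, δ ∈ ℝ with 2s + t ≥ r, s > 0 and 0 < δ < 2s, let f ∈ H^{r+δ}(𝕋^n), let ε > 0, let g ∈ L_t^{2,2}(X_{d,n};w) with ‖g‖_{L_t^{2,2}(X_{d,n};w)} ≤ ε, and let 0 < α ≤ c_w²(2s/δ − 1). Then ‖P_{w,s}^α R_d^*(R_d f + g) − f‖_{H^r(𝕋^n)} ≤ α^{δ/(2s)} c_w^{−δ/s} C(δ/(2s)) ‖f‖_{H^{r+δ}(𝕋^n)} + C_w³ c_w^{−2} ε/α, where C(x) = x(x^{−1}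 − 1)^{1−x}. -/
/-!
Setting: the flat torus 𝕋ⁿ = ℝⁿ/ℤⁿ and its d-plane Radon transform.

* Periodic distributions 𝒯' are modeled, via the structure theorem, by their
  Fourier coefficient sequences `ℤⁿ → ℂ` of at most polynomial growth (`PDist`).
* `Gr d n` is the Grassmannian of d-dimensional subspaces of ℚⁿ.
* The d-plane Radon transform is encoded on the Fourier side by the Fourier
  slice identity `(R_{d,A} f)^(k) = f̂(k)` if `k ⊥ A` and `0` otherwise (`radonC`).
* `hsNormSq s c = Σ_k ⟨k⟩^{2s} |c k|²` is the squared H^s(𝕋ⁿ) norm (in ℝ≥0∞),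
  `dataNormSq s w g = Σ_A Σ_k ⟨k⟩^{2s} w(k,A)² |ĝ(k,A)|²` is the squared
  L_s^{2,2}(X_{d,n}; w) norm, `hsNorm`/`dataNorm` are their square roots.
* `Wk w k = Σ_{A ∈ Ω_k} w(k,A)²` and `radonStar` is the adjoint
  `(R_d^* g)^(k) = Σ_{A ∈ Ω_k} w(k,A)² ĝ(k,A)`.
-/

open scoped ENNReal BigOperators
open MeasureTheory Classical Filter

noncomputable section

/-- Symbol of the Fourier multiplier `P_{w,z}^α`:
`p_{w,z}^α(k) = 1/(W_k + α⟨k⟩^{2z})`. -/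
def pSymb {d n : ℕ} (w : Zn n → Gr d n → ℝ) (z α : ℝ) (k : Zn n) : ℝ :=
  (Wk w k + α * jap k ^ (2*z))⁻¹

/-- The Tikhonov-regularized reconstruction `P_{w,z}^α R_d^* g`. -/
def tikhRecon {d n : ℕ} (w : Zn n → Gr d n → ℝ) (z α : ℝ)
    (g : Gr d n → Zn n → ℂ) : Zn n → ℂ :=
  fun k => ((pSymb w z α k : ℝ) : ℂ) * radonStar w g k

/-- The constant `C(x) = x (x⁻¹ − 1)^{1−x}`. -/
def Cconst (x : ℝ) : ℝ := x * (x⁻¹ - 1) ^ (1 - x)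


lemma jap_one_le {n : ℕ} (k : Zn n) : 1 ≤ jap k := by
  unfold jap
  rw [Real.one_le_sqrt]
  have : 0 ≤ ∑ i, ((k i : ℝ))^2 := Finset.sum_nonneg fun i _ => sq_nonneg _
  linarith

lemma Cconst_key (θ y : ℝ) (h0 : 0 < θ) (h1 : θ < 1) (hy : 0 < y) :
    y ≤ (1 + y) * (y ^ θ * Cconst θ) := by
  have h1' : 0 < 1 - θ := by linarith
  have h := Real.geom_mean_le_arith_mean2_weighted (w₁ := 1 - θ) (w₂ := θ)
    (p₁ := y / (1 - θ)) (p₂ := 1 / θ) h1'.le h0.le (by positivity) (by positivity) (by ring)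
  have e : (1 - θ) * (y / (1 - θ)) + θ * (1 / θ) = 1 + y := by field_simp; ring
  rw [e] at h
  have e2 : Cconst θ = θ ^ θ * (1 - θ) ^ (1 - θ) := by
    unfold Cconst
    have : θ⁻¹ - 1 = (1 - θ) / θ := by field_simp
    rw [this, Real.div_rpow h1'.le h0.le]
    have h3 : θ ^ θ * θ ^ (1 - θ) = θ := by
      rw [← Real.rpow_add h0]; simp
    have : 0 < θ ^ (1 - θ) := by positivity
    field_simp
    linarith [h3]
  rw [Real.div_rpow hy.le h1'.le, Real.div_rpow zero_le_one h0.le, Real.one_rpow] at h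
  rw [e2]
  have hyy : y ^ (1 - θ) * y ^ θ = y := by
    rw [← Real.rpow_add hy]; simp
  have ha : 0 < θ ^ θ := by positivity
  have hb : 0 < (1 - θ) ^ (1 - θ) := by positivity
  have hc : 0 < y ^ θ := by positivity
  have h2 := mul_le_mul_of_nonneg_right h (show 0 ≤ y ^ θ * (θ ^ θ * (1 - θ) ^ (1 - θ)) by positivity)
  refine le_trans (le_of_eq ?_) h2
  field_simp
  linarith [hyy]

lemma cs_tsum {ι : Type*} (w : ι → ℝ) (g : ι → ℂ) (hw : ∀ i, 0 < w i)
    (h1 : Summable fun i => w i ^ 2) (h2 : Summable fun i => w i ^ 2 * ‖g i‖ ^ 2) :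
    Summable (fun i => (w i : ℂ) ^ 2 * g i) ∧
    ‖∑' i, (w i : ℂ) ^ 2 * g i‖ ^ 2 ≤ (∑' i, w i ^ 2) * ∑' i, w i ^ 2 * ‖g i‖ ^ 2 := by
  have h := Real.summable_and_inner_le_Lp_mul_Lq_tsum_of_nonneg (p := 2) (q := 2) (f := w)
    (g := fun i => w i * ‖g i‖) Real.HolderConjugate.two_two (fun i => (hw i).le)
    (fun i => mul_nonneg (hw i).le (norm_nonneg _)) (by simpa using h1)
    (by simpa [mul_pow] using h2)
  obtain ⟨ha, hb⟩ := h
  have e : (fun i => w i * (w i * ‖g i‖)) = fun i => ‖(w i : ℂ) ^ 2 * g i‖ := by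
    funext i
    rw [norm_mul, norm_pow, Complex.norm_real, Real.norm_of_nonneg (hw i).le]; ring
  rw [e] at ha hb
  refine ⟨ha.of_norm, ?_⟩
  have h3 := (norm_tsum_le_tsum_norm ha).trans hb
  simp only [Real.rpow_two, mul_pow, ← Real.sqrt_eq_rpow] at h3
  refine (pow_le_pow_left₀ (norm_nonneg _) h3 2).trans ?_
  rw [mul_pow, Real.sq_sqrt (tsum_nonneg fun i => sq_nonneg _),
    Real.sq_sqrt (tsum_nonneg fun i => by positivity)]

lemma mink {n : ℕ} (F G : Zn n → ℝ≥0∞) :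
    (∑' k, (F k + G k) ^ 2) ^ (1/2 : ℝ) ≤
      (∑' k, F k ^ 2) ^ (1/2 : ℝ) + (∑' k, G k ^ 2) ^ (1/2 : ℝ) := by
  have h := ENNReal.lintegral_Lp_add_le (μ := (Measure.count : Measure (Zn n))) (p := 2)
    (f := F) (g := G) (measurable_of_countable _).aemeasurable
    (measurable_of_countable _).aemeasurable (by norm_num)
  simpa [lintegral_count] using h

lemma scale {n : ℕ} (F G : Zn n → ℝ≥0∞) (K : ℝ) (hK : 0 ≤ K)
    (h : ∀ k, F k ^ 2 ≤ ENNReal.ofReal (K ^ 2) * G k) :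
    (∑' k, F k ^ 2) ^ (1/2 : ℝ) ≤ ENNReal.ofReal K * (∑' k, G k) ^ (1/2 : ℝ) := by
  have := ENNReal.tsum_le_tsum h
  rw [ENNReal.tsum_mul_left] at this
  refine (ENNReal.rpow_le_rpow this (by norm_num)).trans ?_
  rw [ENNReal.mul_rpow_of_nonneg _ _ (by norm_num), ENNReal.ofReal_rpow_of_nonneg (by positivity)
    (by norm_num), ← Real.sqrt_eq_rpow, Real.sqrt_sq hK]

/-- Quantitative convergence rate for the Tikhonov
regularization. If `2s + t ≥ r`, `s > 0`, `0 < δ < 2s`, `f ∈ H^{r+δ}(𝕋ⁿ)`,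
`‖g‖_{L_t^{2,2}(X_{d,n};w)} ≤ ε` and `0 < α ≤ c_w²(2s/δ − 1)`, then
`‖P_{w,s}^α R_d^*(R_d f + g) − f‖_{H^r} ≤
  α^{δ/2s} c_w^{−δ/s} C(δ/2s) ‖f‖_{H^{r+δ}} + C_w³ c_w^{−2} ε/α`. -/
theorem statement9 {n d : ℕ} (hn : 2 ≤ n) (hd1 : 1 ≤ d) (hd2 : d ≤ n - 1)
    (w : Zn n → Gr d n → ℝ) (hw : IsWeight w) (cw Cw : ℝ) (hcw : 0 < cw) (hCw : 0 < Cw)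
    (hWsum : ∀ k : Zn n, Summable (fun A : {A : Gr d n // perp k A} => (w k A.1) ^ 2))
    (hWlb : ∀ k : Zn n, cw ^ 2 ≤ Wk w k) (hWub : ∀ k : Zn n, Wk w k ≤ Cw ^ 2)
    (r t s δ : ℝ) (hrts : r ≤ 2*s + t) (hs : 0 < s) (hδ0 : 0 < δ) (hδ2s : δ < 2*s)
    (f : PDist n) (hf : hsNormSq (r + δ) f.coef < ∞)
    (ε : ℝ) (hε : 0 < ε)
    (g : Gr d n → PDist n) (hg : dataNorm t w (fun A => (g A).coef) ≤ ENNReal.ofReal ε)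
    (α : ℝ) (hα0 : 0 < α) (hαle : α ≤ cw ^ 2 * (2*s/δ - 1)) :
    hsNorm r (fun k : Zn n =>
        tikhRecon w s α (fun A k' => radonC A f.coef k' + (g A).coef k') k - f.coef k)
      ≤ ENNReal.ofReal (α ^ (δ / (2*s)) * cw ^ (-(δ / s)) * Cconst (δ / (2*s)))
          * hsNorm (r + δ) f.coef
        + ENNReal.ofReal (Cw ^ 3 * (cw ^ 2)⁻¹ * (ε / α)) := by
  have hjp : ∀ k : Zn n, 0 < jap k := fun k => lt_of_lt_of_le one_pos (jap_one_le k)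
  set D : Gr d n → Zn n → ℝ≥0∞ := fun A k =>
    ENNReal.ofReal (jap k ^ (2*t) * (w k A)^2 * ‖(g A).coef k‖^2) with hD
  have hDtot : (∑' k, ∑' A, D A k) ^ (1/2 : ℝ) ≤ ENNReal.ofReal ε := by
    rw [ENNReal.tsum_comm]; exact hg
  have hDtop : (∑' k, ∑' A, D A k) ≠ ∞ := by
    intro h
    rw [h, ENNReal.top_rpow_of_pos (by norm_num)] at hDtot
    exact absurd hDtot (by simp)
  have hDk : ∀ k, ∑' A, D A k ≠ ∞ := fun k => ENNReal.ne_top_of_tsum_ne_top hDtop k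
  have hDle : ∀ k, ∑' A : {A : Gr d n // perp k A}, D A.1 k ≤ ∑' A, D A k := fun k =>
    ENNReal.tsum_comp_le_tsum_of_injective Subtype.val_injective (fun A => D A k)
  have hsum1 : ∀ k, Summable (fun A : {A : Gr d n // perp k A} =>
      jap k ^ (2*t) * ((w k A.1)^2 * ‖(g A.1).coef k‖^2)) := by
    intro k
    have h := ENNReal.summable_toReal (ne_top_of_le_ne_top (hDk k) (hDle k))
    refine h.congr fun A => ?_
    have := hjp k
    rw [hD]
    dsimp only
    rw [ENNReal.toReal_ofReal (by positivity)]; ring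
  have hsum2 : ∀ k, Summable (fun A : {A : Gr d n // perp k A} =>
      (w k A.1)^2 * ‖(g A.1).coef k‖^2) := by
    intro k
    exact (summable_mul_left_iff (Real.rpow_pos_of_pos (hjp k) _).ne').1 (hsum1 k)
  have hcs := fun k => cs_tsum (fun A : {A : Gr d n // perp k A} => w k A.1)
    (fun A => (g A.1).coef k) (fun A => hw.1 k A.1) (hWsum k) (hsum2 k)
  set S : Zn n → ℂ := fun k => ∑' A : {A : Gr d n // perp k A},
    ((w k A.1 : ℝ) : ℂ)^2 * (g A.1).coef k with hS
  have hstar : ∀ k, radonStar w (fun A k' => radonC A f.coef k' + (g A).coef k') k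
      = (Wk w k : ℂ) * f.coef k + S k := by
    intro k
    have hWc : HasSum (fun A : {A : Gr d n // perp k A} => ((w k A.1 : ℝ) : ℂ)^2 * f.coef k)
        ((Wk w k : ℂ) * f.coef k) := by
      have h1 := Complex.hasSum_ofReal.2 (hWsum k).hasSum
      have h2 := h1.mul_right (f.coef k)
      simpa [Wk] using h2
    have h3 := (hWc.add (hcs k).1.hasSum).tsum_eq
    rw [← h3]
    unfold radonStar
    refine tsum_congr fun A => ?_
    simp only [radonC, A.2, if_true]
    ring
  have hpp : ∀ k, 0 < Wk w k + α * jap k ^ (2*s) := by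
    intro k
    have h1 := hWlb k
    have := Real.rpow_pos_of_pos (hjp k) (2*s)
    have : 0 < cw ^ 2 := by positivity
    exact add_pos (by linarith) (by positivity)
  set K1 : ℝ := α ^ (δ / (2*s)) * cw ^ (-(δ / s)) * Cconst (δ / (2*s)) with hK1
  have hθ0 : 0 < δ / (2*s) := by positivity
  have hθ1 : δ / (2*s) < 1 := by rw [div_lt_one (by positivity)]; exact hδ2s
  have hK1nn : 0 ≤ K1 := by
    have : 0 ≤ Cconst (δ / (2*s)) := by
      unfold Cconst
      have : 0 ≤ (δ / (2*s))⁻¹ - 1 := by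
        rw [sub_nonneg]; exact (one_le_inv₀ hθ0).2 hθ1.le
      positivity
    positivity
  set F1 : Zn n → ℝ≥0∞ := fun k =>
    ENNReal.ofReal (jap k ^ r * (α * jap k ^ (2*s) * pSymb w s α k * ‖f.coef k‖)) with hF1
  set F2 : Zn n → ℝ≥0∞ := fun k =>
    ENNReal.ofReal (jap k ^ r * (pSymb w s α k * ‖S k‖)) with hF2
  have hpnn : ∀ k, 0 ≤ pSymb w s α k := fun k => inv_nonneg.2 (hpp k).le
  have hpt : ∀ k, ENNReal.ofReal (jap k ^ (2*r) * ‖tikhRecon w s α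
      (fun A k' => radonC A f.coef k' + (g A).coef k') k - f.coef k‖^2) ≤ (F1 k + F2 k)^2 := by
    intro k
    have hj := hjp k
    have hp := hpnn k
    have e1 : tikhRecon w s α (fun A k' => radonC A f.coef k' + (g A).coef k') k - f.coef k
        = -((α * jap k ^ (2*s) * pSymb w s α k : ℝ) : ℂ) * f.coef k
          + ((pSymb w s α k : ℝ) : ℂ) * S k := by
      have e2 : pSymb w s α k * (Wk w k + α * jap k ^ (2*s)) = 1 :=
        inv_mul_cancel₀ (hpp k).ne'
      have e3 : ((pSymb w s α k : ℝ) : ℂ) * ((Wk w k : ℝ) + ((α * jap k ^ (2*s) : ℝ) : ℂ)) = 1 := by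
        exact_mod_cast e2
      unfold tikhRecon
      rw [hstar k, Complex.ofReal_mul (α * jap k ^ (2*s))]
      linear_combination (f.coef k) * e3
    have e4 : ‖tikhRecon w s α (fun A k' => radonC A f.coef k' + (g A).coef k') k - f.coef k‖
        ≤ α * jap k ^ (2*s) * pSymb w s α k * ‖f.coef k‖ + pSymb w s α k * ‖S k‖ := by
      rw [e1]
      refine (norm_add_le _ _).trans (le_of_eq ?_)
      rw [norm_mul, norm_mul, norm_neg, Complex.norm_real, Complex.norm_real,
        Real.norm_of_nonneg hp, Real.norm_of_nonneg (by positivity)]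
    rw [hF1, hF2]
    dsimp only
    rw [← ENNReal.ofReal_add (by positivity) (by positivity), ← ENNReal.ofReal_pow (by positivity),
      ← mul_add, mul_pow]
    refine ENNReal.ofReal_le_ofReal ?_
    have e5 : jap k ^ (2*r) = (jap k ^ r)^2 := by
      rw [mul_comm, Real.rpow_mul hj.le, Real.rpow_two]
    rw [e5]
    gcongr
  have hB1 : ∀ k, F1 k ^ 2 ≤ ENNReal.ofReal (K1 ^ 2) *
      ENNReal.ofReal (jap k ^ (2*(r+δ)) * ‖f.coef k‖^2) := by
    intro k
    have hj := hjp k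
    have hp := hpnn k
    have hx : 0 < jap k ^ (2*s) := Real.rpow_pos_of_pos hj _
    have key : α * jap k ^ (2*s) * pSymb w s α k ≤ K1 * jap k ^ δ := by
      have h := Cconst_key (δ / (2*s)) (α * jap k ^ (2*s) / cw^2) hθ0 hθ1 (by positivity)
      have e1 : (α * jap k ^ (2*s) / cw^2) ^ (δ / (2*s)) * Cconst (δ / (2*s)) = K1 * jap k ^ δ := by
        rw [Real.div_rpow (by positivity) (by positivity), Real.mul_rpow hα0.le hx.le,
          ← Real.rpow_mul hj.le, ← Real.rpow_two cw, ← Real.rpow_mul hcw.le]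
        have e2 : 2 * s * (δ / (2*s)) = δ := by field_simp
        have e3 : 2 * (δ / (2*s)) = δ / s := by field_simp
        rw [e2, e3, hK1, Real.rpow_neg hcw.le]
        ring
      rw [e1] at h
      unfold pSymb
      rw [← div_eq_mul_inv, div_le_iff₀ (hpp k)]
      have hc2 : 0 < cw ^ 2 := by positivity
      have h2 := mul_le_mul_of_nonneg_left h hc2.le
      have e4 : cw ^ 2 * (α * jap k ^ (2*s) / cw^2) = α * jap k ^ (2*s) := by field_simp
      have h3 : α * jap k ^ (2*s) ≤ (cw^2 + α * jap k ^ (2*s)) * (K1 * jap k ^ δ) := by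
        rw [← mul_assoc, mul_add, e4, mul_one] at h2; exact h2
      refine h3.trans ?_
      rw [mul_comm]
      have := hWlb k
      gcongr
    rw [hF1]
    dsimp only
    rw [← ENNReal.ofReal_pow (by positivity), ← ENNReal.ofReal_mul (by positivity)]
    refine ENNReal.ofReal_le_ofReal ?_
    have e5 : jap k ^ (2*(r+δ)) = (jap k ^ r * jap k ^ δ)^2 := by
      rw [mul_comm, Real.rpow_mul hj.le, Real.rpow_two, Real.rpow_add hj]
    rw [e5, ← mul_pow, ← mul_pow]
    refine pow_le_pow_left₀ (by positivity) ?_ 2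
    calc jap k ^ r * (α * jap k ^ (2*s) * pSymb w s α k * ‖f.coef k‖)
        ≤ jap k ^ r * (K1 * jap k ^ δ * ‖f.coef k‖) := by gcongr
      _ = _ := by ring
  have hB2 : ∀ k, F2 k ^ 2 ≤ ENNReal.ofReal ((Cw / α) ^ 2) * ∑' A, D A k := by
    intro k
    have hj := hjp k
    have hp := hpnn k
    have hx : 0 < jap k ^ (2*s) := Real.rpow_pos_of_pos hj _
    have hsub : ENNReal.ofReal (jap k ^ (2*t) * ∑' A : {A : Gr d n // perp k A},
        (w k A.1)^2 * ‖(g A.1).coef k‖^2) ≤ ∑' A, D A k := by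
      refine le_trans (le_of_eq ?_) (hDle k)
      rw [← tsum_mul_left, ENNReal.ofReal_tsum_of_nonneg (fun A => by positivity) (hsum1 k)]
      refine tsum_congr fun A => ?_
      rw [hD]
      dsimp only
      rw [mul_assoc]
    refine le_trans ?_ (mul_le_mul_right hsub _)
    rw [hF2]
    dsimp only
    rw [← ENNReal.ofReal_pow (by positivity), ← ENNReal.ofReal_mul (by positivity)]
    refine ENNReal.ofReal_le_ofReal ?_
    have h1 := (hcs k).2
    change ‖S k‖ ^ 2 ≤ Wk w k * _ at h1
    set T := ∑' A : {A : Gr d n // perp k A}, (w k A.1)^2 * ‖(g A.1).coef k‖^2 with hT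
    have hTnn : 0 ≤ T := tsum_nonneg fun A => by positivity
    have h2 : ‖S k‖ ^ 2 ≤ Cw ^ 2 * T := h1.trans (mul_le_mul_of_nonneg_right (hWub k) hTnn)
    have h3 : jap k ^ r * pSymb w s α k ≤ jap k ^ t / α := by
      have h4 : pSymb w s α k ≤ (α * jap k ^ (2*s))⁻¹ := by
        unfold pSymb
        refine inv_anti₀ (by positivity) ?_
        have := hWlb k
        have : 0 < cw ^ 2 := by positivity
        linarith
      have h5 : jap k ^ r ≤ jap k ^ t * jap k ^ (2*s) := by
        rw [← Real.rpow_add hj]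
        exact Real.rpow_le_rpow_of_exponent_le (jap_one_le k) (by linarith)
      calc jap k ^ r * pSymb w s α k ≤ (jap k ^ t * jap k ^ (2*s)) * (α * jap k ^ (2*s))⁻¹ := by
            gcongr
        _ = jap k ^ t / α := by field_simp
    have e5 : jap k ^ (2*t) = (jap k ^ t)^2 := by
      rw [mul_comm, Real.rpow_mul hj.le, Real.rpow_two]
    calc (jap k ^ r * (pSymb w s α k * ‖S k‖))^2
        = (jap k ^ r * pSymb w s α k)^2 * ‖S k‖^2 := by ring
      _ ≤ (jap k ^ t / α)^2 * (Cw^2 * T) := by gcongr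
      _ = (Cw / α)^2 * (jap k ^ (2*t) * T) := by rw [e5]; ring
  have hm := mink F1 F2
  have hb1 := scale F1 _ K1 hK1nn hB1
  have hb2 := scale F2 _ (Cw / α) (by positivity) hB2
  have hlast : ENNReal.ofReal (Cw / α) * (∑' k, ∑' A, D A k) ^ (1/2 : ℝ) ≤
      ENNReal.ofReal (Cw ^ 3 * (cw ^ 2)⁻¹ * (ε / α)) := by
    refine (mul_le_mul_right hDtot _).trans ?_
    rw [← ENNReal.ofReal_mul (by positivity)]
    refine ENNReal.ofReal_le_ofReal ?_
    have h1 : cw ^ 2 ≤ Cw ^ 2 := (hWlb 0).trans (hWub 0)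
    have h2 : 1 ≤ Cw ^ 2 * (cw ^ 2)⁻¹ := by
      rw [← div_eq_mul_inv, one_le_div (by positivity)]; exact h1
    calc Cw / α * ε = 1 * (Cw * (ε / α)) := by ring
      _ ≤ (Cw ^ 2 * (cw ^ 2)⁻¹) * (Cw * (ε / α)) := by gcongr
      _ = _ := by ring
  calc _ ≤ (∑' k, (F1 k + F2 k) ^ 2) ^ (1/2 : ℝ) :=
        ENNReal.rpow_le_rpow (ENNReal.tsum_le_tsum hpt) (by norm_num)
    _ ≤ _ := hm
    _ ≤ _ := add_le_add hb1 (hb2.trans hlast)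
end
end
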